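/- Let P and Q be finite sets of points in the plane (possibly containing collinear triples), each of cardinality n, each not contained in a line, such that P has exactly one internal point and Q has exactly one internal point. Then there exist a triangulation T_P of P and a triangulation T_Q of Q that are compatible; moreover compatible triangulations are obtained by joining the internal point of each set to all convex hull points of that set. -/

import Mathlib

open Set

/-- Points of the plane. -/
abbrev Pt : Type := ℝ × ℝ

noncomputable section

/-- The determinant of two plane vectors. -/
def det2 (u v : Pt) : ℝ := u.1 * v.2 - u.2 * v.1

/-- A triple `(a,b,c)` of points is clockwise-ordered if `det (b-a, c-a) < 0`. -/
def Clockwise (a b c : Pt) : Prop := det2 (b - a) (c - a) < 0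

/-- The closed segments `[a,b]` and `[c,d]` cross: they intersect in a point that is not a
common endpoint of the two segments. -/
def Crosses (a b c d : Pt) : Prop :=
  ∃ x : Pt, x ∈ segment ℝ a b ∧ x ∈ segment ℝ c d ∧
    ¬((x = a ∨ x = b) ∧ (x = c ∨ x = d))

/-- `T` is a set of unordered pairs of distinct points of `P` whose corresponding
segments are pairwise non-crossing. -/
def ValidSegs (P : Finset Pt) (T : Set (Sym2 Pt)) : Prop :=
  (∀ e ∈ T, ∃ a b : Pt, a ∈ P ∧ b ∈ P ∧ a ≠ b ∧ e = s(a, b)) ∧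
  (∀ a b c d : Pt, s(a, b) ∈ T → s(c, d) ∈ T → s(a, b) ≠ s(c, d) → ¬ Crosses a b c d)

/-- A triangulation of `P`: a maximal (w.r.t. inclusion) set of unordered pairs of distinct
points of `P`, no two of whose segments cross. -/
def IsTriangulation (P : Finset Pt) (T : Set (Sym2 Pt)) : Prop :=
  ValidSegs P T ∧ ∀ T' : Set (Sym2 Pt), ValidSegs P T' → T ⊆ T' → T' = T

/-- A convex hull point of `P`: a point of `P` on the boundary of `conv P`. -/
def HullPoint (P : Finset Pt) (p : Pt) : Prop :=
  p ∈ P ∧ p ∈ frontier (convexHull ℝ (P : Set Pt))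

/-- An internal point of `P`: a point of `P` in the interior of `conv P`. -/
def InternalPoint (P : Finset Pt) (p : Pt) : Prop :=
  p ∈ P ∧ p ∈ interior (convexHull ℝ (P : Set Pt))

/-- The number of convex hull points of `P`. -/
def hullCount (P : Finset Pt) : ℕ := {p : Pt | HullPoint P p}.ncard

/-- The number of internal points of `P`. -/
def internalCount (P : Finset Pt) : ℕ := {p : Pt | InternalPoint P p}.ncard

/-- The open triangle with vertices `a`, `b`, `c`. -/
def openTriangle (a b c : Pt) : Set Pt := interior (convexHull ℝ ({a, b, c} : Set Pt))

/-- `(a,b,c)` is a triangle of the triangulation `T` of `P`: the three points are distinct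
points of `P`, the three pairs are in `T`, and the open triangle `abc` contains no point of
`P` and meets no segment of `T`. -/
def IsTriangleOf (P : Finset Pt) (T : Set (Sym2 Pt)) (a b c : Pt) : Prop :=
  a ∈ P ∧ b ∈ P ∧ c ∈ P ∧ a ≠ b ∧ b ≠ c ∧ a ≠ c ∧
  s(a, b) ∈ T ∧ s(b, c) ∈ T ∧ s(a, c) ∈ T ∧
  (∀ p ∈ P, p ∉ openTriangle a b c) ∧
  (∀ u v : Pt, s(u, v) ∈ T → ∀ x ∈ segment ℝ u v, x ∉ openTriangle a b c)

/-- Triangulations `TP` of `P` and `TQ` of `Q` are compatible via the bijection `φ : P → Q`: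
`(a,b,c)` is a clockwise-ordered triangle of `TP` iff `(φ a, φ b, φ c)` is a
clockwise-ordered triangle of `TQ`. -/
def CompatibleVia (P Q : Finset Pt) (TP TQ : Set (Sym2 Pt)) (φ : Pt → Pt) : Prop :=
  Set.BijOn φ (P : Set Pt) (Q : Set Pt) ∧
  ∀ a b c : Pt, a ∈ P → b ∈ P → c ∈ P →
    ((IsTriangleOf P TP a b c ∧ Clockwise a b c) ↔
     (IsTriangleOf Q TQ (φ a) (φ b) (φ c) ∧ Clockwise (φ a) (φ b) (φ c)))

/-- Triangulations `TP` of `P` and `TQ` of `Q` are compatible. -/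
def Compatible (P Q : Finset Pt) (TP TQ : Set (Sym2 Pt)) : Prop :=
  ∃ φ : Pt → Pt, CompatibleVia P Q TP TQ φ

/-- The degree of a point `p` in a triangulation `T`: the number of pairs of `T`
containing `p`. -/
def degreeIn (T : Set (Sym2 Pt)) (p : Pt) : ℕ := {e ∈ T | p ∈ e}.ncard

/-- `P` is in general position: no three points of `P` are collinear. -/
def GenPos (P : Finset Pt) : Prop :=
  ∀ a b c : Pt, a ∈ P → b ∈ P → c ∈ P → a ≠ b → b ≠ c → a ≠ c →
    ¬ Collinear ℝ ({a, b, c} : Set Pt)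

end

/-!
Seen from the internal point `p`, the remaining points lie on pairwise distinct rays, and no line
through `p` has all of them on one side. The spokes from `p` together with the segments between
angularly consecutive points form a wheel. A segment `[a, b]` outside the wheel either passes
through `p` or, by convexity, meets the spoke of a point strictly between `a` and `b` in angle, so
the wheel is a triangulation. Its triangles are spanned by `p` and two consecutive points, hence are
determined by the cyclic angular order alone; matching the two internal points, and the other points
in order of their angles, is therefore a compatibility.
-/

/-! ### Orientation -/

/-- The orientation determinant of the triangle `p a b`: twice its signed area, positive when `b` is
counterclockwise of `a` as seen from `p`. -/
def orient (p a b : Pt) : ℝ := det2 (a - p) (b - p)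

section Orientation

variable (p a b c x : Pt)

theorem clockwise_iff_orient_neg : Clockwise a b c ↔ orient a b c < 0 := Iff.rfl

theorem orient_swap : orient p b a = -orient p a b := by
  simp only [orient, det2]; ring

theorem orient_rotate : orient b c a = orient a b c := by
  simp only [orient, det2, Prod.fst_sub, Prod.snd_sub]; ring

@[simp]
theorem orient_self_left : orient p p a = 0 := by simp [orient, det2]

@[simp]
theorem orient_self_right : orient p a a = 0 := by simp [orient, det2, mul_comm]

@[simp]
theorem orient_self_outer : orient p a p = 0 := by simp [orient, det2]

theorem orient_mul_orient :
    orient p a x * orient p c b = orient p a c * orient p x b + orient p a b * orient p c x := by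
  simp only [orient, det2]; ring

theorem orient_smul_sub :
    orient p a b • (x - p) = orient p x b • (a - p) + orient p a x • (b - p) := by
  ext <;> simp [orient, det2] <;> ring

theorem orient_smul :
    orient a b c • x = orient b c x • a + orient c a x • b + orient a b x • c := by
  ext <;> simp [orient, det2] <;> ring

theorem orient_eq_add_add : orient a b c = orient b c x + orient c a x + orient a b x := by
  simp only [orient, det2, Prod.fst_sub, Prod.snd_sub]; ring

variable {p a b c x}

theorem orient_combo_right {s t : ℝ} (hst : s + t = 1) :
    orient p x (s • a + t • b) = s * orient p x a + t * orient p x b := by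
  obtain rfl : s = 1 - t := eq_sub_of_add_eq hst
  simp only [orient, det2, Prod.fst_sub, Prod.snd_sub, Prod.fst_add, Prod.snd_add, Prod.smul_fst,
    Prod.smul_snd, smul_eq_mul]
  ring

theorem orient_combo_left {s t : ℝ} (hst : s + t = 1) :
    orient p (s • a + t • b) x = s * orient p a x + t * orient p b x := by
  rw [orient_swap, orient_combo_right hst, orient_swap p a x, orient_swap p b x]; ring

theorem ne_of_orient_pos (h : 0 < orient p a b) : a ≠ b := by
  rintro rfl
  simp at h

theorem sub_eq_smul_sub_of_orient_eq_zero (hab : orient p a b = 0) (hax : orient p a x ≠ 0) :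
    b - p = (orient p b x / orient p a x) • (a - p) := by
  have h := orient_smul_sub p a x b
  rw [hab, zero_smul, add_zero] at h
  rw [div_eq_inv_mul, mul_smul, ← h, inv_smul_smul₀ hax]

end Orientation

/-! ### Half-planes, cones and triangles -/

theorem isOpenMap_orient {u v : Pt} (huv : u ≠ v) : IsOpenMap (orient u v) := by
  let ℓ : Pt →L[ℝ] ℝ :=
    (v - u).1 • ContinuousLinearMap.snd ℝ ℝ ℝ - (v - u).2 • ContinuousLinearMap.fst ℝ ℝ ℝ
  have hℓ : ℓ ≠ 0 := by
    intro h
    have h₁ : (v - u).1 = 0 := by simpa [ℓ] using DFunLike.congr_fun h (0, 1)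
    have h₂ : (v - u).2 = 0 := by simpa [ℓ, sub_eq_zero, eq_comm] using DFunLike.congr_fun h (1, 0)
    exact huv (sub_eq_zero.1 (Prod.ext h₁ h₂)).symm
  exact (ℓ.isOpenMap_of_ne_zero hℓ).comp (Homeomorph.subRight u).isOpenMap

theorem convex_setOf_orient_nonneg (u v : Pt) : Convex ℝ {x | 0 ≤ orient u v x} := by
  intro x hx y hy s t hs ht hst
  rw [mem_ofPred_eq, orient_combo_right hst]
  exact add_nonneg (mul_nonneg hs hx) (mul_nonneg ht hy)

theorem orient_pos_of_mem_interior_convexHull {S : Set Pt} {u v z : Pt} (huv : u ≠ v)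
    (hS : ∀ x ∈ S, 0 ≤ orient u v x) (hz : z ∈ interior (convexHull ℝ S)) :
    0 < orient u v z := by
  have hhull : MapsTo (orient u v) (convexHull ℝ S) (Ici 0) :=
    convexHull_min hS (convex_setOf_orient_nonneg u v)
  have hint := (isOpenMap_orient huv).mapsTo_interior hhull
  rw [interior_Ici] at hint
  exact hint hz

theorem openTriangle_rotate (a b c : Pt) : openTriangle b c a = openTriangle a b c := by
  rw [openTriangle, openTriangle, Set.pair_comm c a, Set.insert_comm b a]

theorem openTriangle_swap (a b c : Pt) : openTriangle a c b = openTriangle a b c := by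
  rw [openTriangle, openTriangle, Set.pair_comm]

theorem orient_pos_of_mem_openTriangle {a b c x : Pt} (habc : 0 < orient a b c)
    (hx : x ∈ openTriangle a b c) : 0 < orient a b x := by
  refine orient_pos_of_mem_interior_convexHull ?_ ?_ hx
  · rintro rfl
    simp at habc
  · rintro y (rfl | rfl | rfl)
    exacts [(orient_self_outer _ _).ge, (orient_self_right _ _).ge, habc.le]

theorem mem_openTriangle_of_orient_pos {a b c x : Pt} (hab : 0 < orient a b x)
    (hbc : 0 < orient b c x) (hca : 0 < orient c a x) : x ∈ openTriangle a b c := by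
  have hopen : IsOpen {y | 0 < orient a b y ∧ 0 < orient b c y ∧ 0 < orient c a y} := by
    have hcont (u v : Pt) : Continuous (orient u v) := by unfold orient det2; fun_prop
    exact (isOpen_lt continuous_const (hcont a b)).inter
      ((isOpen_lt continuous_const (hcont b c)).inter (isOpen_lt continuous_const (hcont c a)))
  refine interior_maximal ?_ hopen ⟨hab, hbc, hca⟩
  rintro y ⟨hab, hbc, hca⟩
  let w : Fin 3 → ℝ := ![orient b c y, orient c a y, orient a b y]
  have hsum : ∑ i, w i = orient a b c := by
    rw [Fin.sum_univ_three, orient_eq_add_add a b c y]; rfl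
  have hpos : 0 < ∑ i, w i := by
    rw [hsum, orient_eq_add_add a b c y]; positivity
  have hcenter : Finset.univ.centerMass w ![a, b, c] = y := by
    rw [Finset.centerMass, inv_smul_eq_iff₀ hpos.ne', hsum, orient_smul, Fin.sum_univ_three]; rfl
  rw [← hcenter]
  refine Finset.centerMass_mem_convexHull _ (fun i _ ↦ ?_) hpos (fun i _ ↦ ?_)
  · fin_cases i
    exacts [hbc.le, hca.le, hab.le]
  · fin_cases i <;> simp

theorem mem_openTriangle_iff {a b c x : Pt} (habc : 0 < orient a b c) :
    x ∈ openTriangle a b c ↔ 0 < orient a b x ∧ 0 < orient b c x ∧ 0 < orient c a x := by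
  refine ⟨fun hx ↦ ⟨orient_pos_of_mem_openTriangle habc hx, ?_, ?_⟩,
    fun ⟨hab, hbc, hca⟩ ↦ mem_openTriangle_of_orient_pos hab hbc hca⟩
  · exact orient_pos_of_mem_openTriangle (by rwa [orient_rotate]) (by rwa [openTriangle_rotate])
  · exact orient_pos_of_mem_openTriangle (by rwa [← orient_rotate])
      (by rwa [← openTriangle_rotate])

/-- The open cone with apex `p` spanned by the rays through `a` and `b`, when `b` is less than half
a turn counterclockwise of `a`: its points are those strictly between `a` and `b` in angle. -/
def openCone (p a b : Pt) : Set Pt := {x | 0 < orient p a x ∧ 0 < orient p x b}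

theorem openSegment_subset_openCone {p a b : Pt} (hab : 0 < orient p a b) :
    openSegment ℝ a b ⊆ openCone p a b := by
  rintro _ ⟨s, t, hs, ht, hst, rfl⟩
  constructor
  · simpa [orient_combo_right hst] using mul_pos ht hab
  · simpa [orient_combo_left hst] using mul_pos hs hab

theorem mem_openCone_of_mem_segment {p a b h x : Pt} (hx : x ∈ segment ℝ p h)
    (hxab : x ∈ openCone p a b) : h ∈ openCone p a b := by
  obtain ⟨s, t, -, ht, hst, rfl⟩ := hx
  obtain ⟨hax, hxb⟩ := hxab
  simp only [orient_combo_right hst, orient_self_outer, mul_zero, zero_add] at hax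
  simp only [orient_combo_left hst, orient_self_left, mul_zero, zero_add] at hxb
  exact ⟨pos_of_mul_pos_right hax ht, pos_of_mul_pos_right hxb ht⟩

theorem openTriangle_subset_openCone {p a b : Pt} (hab : 0 < orient p a b) :
    openTriangle p a b ⊆ openCone p a b := by
  intro x hx
  obtain ⟨hpa, -, hbp⟩ := (mem_openTriangle_iff hab).1 hx
  exact ⟨hpa, by rwa [← orient_rotate, ← orient_rotate]⟩

theorem notMem_openTriangle_of_mem_segment {p a b x : Pt} (hab : 0 < orient p a b)
    (hx : x ∈ segment ℝ a b) : x ∉ openTriangle p a b := by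
  intro hx'
  obtain ⟨s, t, -, -, hst, rfl⟩ := hx
  have := ((mem_openTriangle_iff hab).1 hx').2.1
  simp [orient_combo_right hst] at this

theorem mem_segment_or_mem_segment_of_sameRay {E : Type*} [AddCommGroup E] [Module ℝ E]
    {x y z : E} (h : SameRay ℝ (y - x) (z - x)) : y ∈ segment ℝ x z ∨ z ∈ segment ℝ x y := by
  simpa only [mem_segment_iff_wbtw] using
    wbtw_total_of_sameRay_vsub_left (R := ℝ) (x := x) (y := y) (z := z) h

theorem exists_mem_openSegment_sameRay {p a b c : Pt} (hab : 0 < orient p a b)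
    (hc : c ∈ openCone p a b) : ∃ y ∈ openSegment ℝ a b, SameRay ℝ (y - p) (c - p) := by
  obtain ⟨hac, hcb⟩ := hc
  have hsum : 0 < orient p c b + orient p a c := add_pos hcb hac
  have hone : orient p c b / (orient p c b + orient p a c) +
      orient p a c / (orient p c b + orient p a c) = 1 := by
    rw [← add_div, div_self hsum.ne']
  refine ⟨_, ⟨_, _, div_pos hcb hsum, div_pos hac hsum, hone, rfl⟩, ?_⟩
  refine .inr (.inr ⟨_, _, hsum, hab, ?_⟩)
  rw [orient_smul_sub]
  match_scalars <;> field_simp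
  ring

/-! ### The internal point seen as a hub -/

theorem mem_convexHull_insert {E : Type*} [AddCommGroup E] [Module ℝ E] [DecidableEq E]
    {s : Finset E} {x y : E} (hy : y ∈ s) :
    y ∈ convexHull ℝ ((insert x s : Finset E) : Set E) :=
  subset_convexHull ℝ _ (Finset.mem_insert_of_mem hy)

/-- `p` is the hub of `H` if `p` is internal to `insert p H`, while all points of `H` are on its
convex hull boundary. This is the shape of a point set with exactly one internal point. -/
structure IsHub (H : Finset Pt) (p : Pt) : Prop where
  internalPoint : InternalPoint (insert p H) p
  hullPoint : ∀ a ∈ H, HullPoint (insert p H) a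

theorem exists_isHub_of_internalPoints_eq {P : Finset Pt} {p : Pt}
    (hP : {x | InternalPoint P x} = {p}) : ∃ H : Finset Pt, P = insert p H ∧ IsHub H p := by
  have hp : InternalPoint P p := hP.ge rfl
  refine ⟨P.erase p, (Finset.insert_erase hp.1).symm, ?_, fun a ha ↦ ?_⟩ <;>
    rw [Finset.insert_erase hp.1]
  · exact hp
  · have haP := Finset.mem_of_mem_erase ha
    refine ⟨haP, subset_closure (subset_convexHull ℝ _ haP), fun ha_int ↦ ?_⟩
    exact Finset.ne_of_mem_erase ha (hP.le ⟨haP, ha_int⟩)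

namespace IsHub

variable {H : Finset Pt} {p a b c x : Pt}

theorem notMem (hH : IsHub H p) : p ∉ H :=
  fun hp ↦ (hH.hullPoint p hp).2.2 hH.internalPoint.2

theorem ne (hH : IsHub H p) (ha : a ∈ H) : a ≠ p :=
  ne_of_mem_of_not_mem ha hH.notMem

theorem eq_of_mem_segment (hH : IsHub H p) (ha : a ∈ H)
    (hx : x ∈ convexHull ℝ ((insert p H : Finset Pt) : Set Pt)) (hax : a ∈ segment ℝ p x) :
    a = x := by
  by_contra hne
  have hopen := mem_openSegment_of_ne_left_right (hH.ne ha).symm (Ne.symm hne) hax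
  exact (hH.hullPoint a ha).2.2 ((convex_convexHull ℝ _).openSegment_interior_self_subset_interior
    hH.internalPoint.2 hx hopen)

theorem eq_of_sameRay (hH : IsHub H p) (ha : a ∈ H) (hb : b ∈ H)
    (hab : SameRay ℝ (a - p) (b - p)) : a = b := by
  rcases mem_segment_or_mem_segment_of_sameRay hab with h | h
  · exact hH.eq_of_mem_segment ha (mem_convexHull_insert hb) h
  · exact (hH.eq_of_mem_segment hb (mem_convexHull_insert ha) h).symm

theorem eq_of_orient_eq_zero (hH : IsHub H p) (ha : a ∈ H) (hb : b ∈ H)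
    (hab : orient p a b = 0) (hax : orient p a x ≠ 0)
    (hx : 0 ≤ orient p b x / orient p a x) : a = b := by
  refine hH.eq_of_sameRay ha hb ?_
  rw [sub_eq_smul_sub_of_orient_eq_zero hab hax]
  exact .sameRay_nonneg_smul_right _ hx

theorem exists_orient_pos (hH : IsHub H p) (ha : a ∈ H) : ∃ b ∈ H, 0 < orient p a b := by
  by_contra! hle
  have hnonneg : ∀ x ∈ ((insert p H : Finset Pt) : Set Pt), 0 ≤ orient a p x := by
    intro x hx
    rw [← orient_rotate, orient_swap, neg_nonneg]
    rcases Finset.mem_insert.1 hx with rfl | hx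
    exacts [(orient_self_outer _ _).le, hle x hx]
  have := orient_pos_of_mem_interior_convexHull (hH.ne ha) hnonneg hH.internalPoint.2
  simp at this

theorem mem_segment_of_orient_eq_zero (hH : IsHub H p) (ha : a ∈ H) (hb : b ∈ H) (hne : a ≠ b)
    (hab : orient p a b = 0) : p ∈ segment ℝ a b := by
  obtain ⟨x, -, hax⟩ := hH.exists_orient_pos ha
  have hneg : orient p b x / orient p a x < 0 :=
    not_le.1 (mt (hH.eq_of_orient_eq_zero ha hb hab hax.ne') hne)
  have hsub : b - p = (-(orient p b x / orient p a x)) • (p - a) := by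
    rw [sub_eq_smul_sub_of_orient_eq_zero hab hax.ne', neg_smul, ← smul_neg, neg_sub]
  rw [mem_segment_iff_sameRay, hsub]
  exact .sameRay_nonneg_smul_right _ (neg_nonneg.2 hneg.le)

theorem exists_mem_openSegment_mem_segment (hH : IsHub H p) (ha : a ∈ H) (hb : b ∈ H) (hc : c ∈ H)
    (hab : 0 < orient p a b) (hcab : c ∈ openCone p a b) :
    ∃ y ∈ openSegment ℝ a b, y ∈ segment ℝ p c := by
  obtain ⟨y, hy, hray⟩ := exists_mem_openSegment_sameRay hab hcab
  refine ⟨y, hy, ?_⟩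
  rcases mem_segment_or_mem_segment_of_sameRay hray with h | h
  · exact h
  · have hy_hull := (convex_convexHull ℝ _).openSegment_subset (mem_convexHull_insert (x := p) ha)
      (mem_convexHull_insert hb) hy
    rw [← hH.eq_of_mem_segment hc hy_hull h]
    exact right_mem_segment ℝ p c

end IsHub

/-! ### Angularly consecutive points -/

/-- `b` is the counterclockwise successor of `a` among the points of `H` as seen from `p`: it is
less than half a turn away and no point of `H` lies strictly between the two in angle. -/
structure IsCcwSucc (H : Finset Pt) (p a b : Pt) : Prop where
  left_mem : a ∈ H
  right_mem : b ∈ H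
  orient_pos : 0 < orient p a b
  notMem_openCone : ∀ c ∈ H, c ∉ openCone p a b

namespace IsCcwSucc

variable {H : Finset Pt} {p a b c d x : Pt}

theorem not_trans (hab : IsCcwSucc H p a b) (hbc : IsCcwSucc H p b c) : ¬ IsCcwSucc H p a c :=
  fun hac ↦ hac.notMem_openCone b hab.right_mem ⟨hab.orient_pos, hbc.orient_pos⟩

theorem right_unique (hH : IsHub H p) (hab : IsCcwSucc H p a b) (hac : IsCcwSucc H p a c) :
    b = c := by
  have hbc : orient p b c ≤ 0 := not_lt.1 fun h ↦
    hac.notMem_openCone b hab.right_mem ⟨hab.orient_pos, h⟩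
  have hcb : orient p c b ≤ 0 := not_lt.1 fun h ↦
    hab.notMem_openCone c hac.right_mem ⟨hac.orient_pos, h⟩
  have hba : orient p b a < 0 := by rw [orient_swap]; exact neg_lt_zero.2 hab.orient_pos
  have hca : orient p c a < 0 := by rw [orient_swap]; exact neg_lt_zero.2 hac.orient_pos
  rw [orient_swap, neg_nonpos] at hcb
  exact hH.eq_of_orient_eq_zero hab.right_mem hac.right_mem (hbc.antisymm hcb) hba.ne
    (div_nonneg_of_nonpos hca.le hba.le)

theorem orient_nonpos_of_mem_openCone (hab : IsCcwSucc H p a b) (hx : x ∈ openCone p a b)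
    (hc : c ∈ H) (hcx : 0 < orient p c x) : orient p a c ≤ 0 := by
  by_contra! hac
  have hmul : 0 < orient p a x * orient p c b := by
    rw [orient_mul_orient]
    exact add_pos (mul_pos hac hx.2) (mul_pos hab.orient_pos hcx)
  exact hab.notMem_openCone c hc ⟨hac, pos_of_mul_pos_right hmul hx.1.le⟩

theorem eq_of_mem_openCone (hH : IsHub H p) (hab : IsCcwSucc H p a b) (hcd : IsCcwSucc H p c d)
    (hx : x ∈ openCone p a b) (hx' : x ∈ openCone p c d) : a = c ∧ b = d := by
  have hac := hab.orient_nonpos_of_mem_openCone hx hcd.left_mem hx'.1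
  have hca := hcd.orient_nonpos_of_mem_openCone hx' hab.left_mem hx.1
  rw [orient_swap, neg_nonpos] at hca
  obtain rfl : a = c := hH.eq_of_orient_eq_zero hab.left_mem hcd.left_mem (hac.antisymm hca)
    hx.1.ne' (div_nonneg hx'.1.le hx.1.le)
  exact ⟨rfl, right_unique hH hab hcd⟩

theorem notMem_openCone_of_mem_segment (hab : IsCcwSucc H p a b) (hc : c ∈ H)
    (hx : x ∈ segment ℝ p c) : x ∉ openCone p a b :=
  fun h ↦ hab.notMem_openCone c hc (mem_openCone_of_mem_segment hx h)

theorem eq_or_eq_or_mem_openCone (hab : IsCcwSucc H p a b) (hx : x ∈ segment ℝ a b) :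
    x = a ∨ x = b ∨ x ∈ openCone p a b := by
  rw [← insert_endpoints_openSegment] at hx
  exact hx.imp_right (.imp_right (openSegment_subset_openCone hab.orient_pos ·))

end IsCcwSucc

/-! ### The wheel -/

/-- The wheel of `H` with hub `p`: the spokes joining `p` to the points of `H`, and the rim joining
consecutive points of `H`. -/
def wheel (H : Finset Pt) (p : Pt) : Set (Sym2 Pt) :=
  {e | (∃ h ∈ H, e = s(p, h)) ∨ ∃ a b, IsCcwSucc H p a b ∧ e = s(a, b)}

theorem segment_congr {E : Type*} [AddCommGroup E] [Module ℝ E] {a b c d : E}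
    (h : s(a, b) = s(c, d)) : segment ℝ a b = segment ℝ c d := by
  rcases Sym2.eq_iff.1 h with ⟨rfl, rfl⟩ | ⟨rfl, rfl⟩
  exacts [rfl, segment_symm ℝ _ _]

theorem not_crosses_iff {a b c d : Pt} :
    ¬ Crosses a b c d ↔
      ∀ x ∈ segment ℝ a b, x ∈ segment ℝ c d → x ∈ s(a, b) ∧ x ∈ s(c, d) :=
  ⟨fun h x hab hcd ↦ by_contra fun hx ↦ h ⟨x, hab, hcd, by simpa only [Sym2.mem_iff] using hx⟩,
    fun h ⟨x, hab, hcd, hx⟩ ↦ hx (by simpa only [Sym2.mem_iff] using h x hab hcd)⟩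

section Wheel

variable {H : Finset Pt} {p a b c d h k x : Pt}

theorem spoke_mem_wheel (hh : h ∈ H) : s(p, h) ∈ wheel H p := .inl ⟨h, hh, rfl⟩

theorem IsCcwSucc.mem_wheel (hab : IsCcwSucc H p a b) : s(a, b) ∈ wheel H p :=
  .inr ⟨a, b, hab, rfl⟩

theorem isCcwSucc_or_isCcwSucc_of_mem_wheel (ha : a ≠ p) (hb : b ≠ p) (hab : s(a, b) ∈ wheel H p) :
    IsCcwSucc H p a b ∨ IsCcwSucc H p b a := by
  rcases hab with ⟨h, -, he⟩ | ⟨c, d, hcd, he⟩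
  · rcases Sym2.eq_iff.1 he with ⟨rfl, -⟩ | ⟨-, rfl⟩
    exacts [absurd rfl ha, absurd rfl hb]
  · rcases Sym2.eq_iff.1 he with ⟨rfl, rfl⟩ | ⟨rfl, rfl⟩
    exacts [.inl hcd, .inr hcd]

namespace IsHub

theorem spoke_mem_wheel_of_hullPoint (hH : IsHub H p) (hh : HullPoint (insert p H) h) :
    s(p, h) ∈ wheel H p := by
  refine spoke_mem_wheel ((Finset.mem_insert.1 hh.1).resolve_left ?_)
  rintro rfl
  exact hh.2.2 hH.internalPoint.2

theorem eq_of_mem_spokes (hH : IsHub H p) (hh : h ∈ H) (hk : k ∈ H) (hxh : x ∈ segment ℝ p h)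
    (hxk : x ∈ segment ℝ p k) : x = p ∨ h = k := by
  refine or_iff_not_imp_left.2 fun hx ↦ hH.eq_of_sameRay hh hk ?_
  have hray {y : Pt} (hy : x ∈ segment ℝ p y) : SameRay ℝ (x - p) (y - p) :=
    (mem_segment_iff_wbtw.1 hy).sameRay_vsub_left
  exact (hray hxh).symm.trans (hray hxk) fun h₀ ↦ absurd (sub_eq_zero.1 h₀) hx

theorem eq_of_mem_spoke_of_mem_rim (hH : IsHub H p) (hh : h ∈ H) (hab : IsCcwSucc H p a b)
    (hxh : x ∈ segment ℝ p h) (hxab : x ∈ segment ℝ a b) : x = h ∧ (x = a ∨ x = b) := by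
  rcases hab.eq_or_eq_or_mem_openCone hxab with rfl | rfl | hx
  · exact ⟨hH.eq_of_mem_segment hab.left_mem (mem_convexHull_insert hh) hxh, .inl rfl⟩
  · exact ⟨hH.eq_of_mem_segment hab.right_mem (mem_convexHull_insert hh) hxh, .inr rfl⟩
  · exact absurd hx (hab.notMem_openCone_of_mem_segment hh hxh)

theorem eq_of_mem_rims (hH : IsHub H p) (hab : IsCcwSucc H p a b) (hcd : IsCcwSucc H p c d)
    (hxab : x ∈ segment ℝ a b) (hxcd : x ∈ segment ℝ c d) :
    ((x = a ∨ x = b) ∧ (x = c ∨ x = d)) ∨ (a = c ∧ b = d) := by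
  have hvertex {u v : Pt} (huv : IsCcwSucc H p u v) (hx : x ∈ H) (hxuv : x ∈ segment ℝ u v) :=
    (hH.eq_of_mem_spoke_of_mem_rim hx huv (right_mem_segment ℝ p x) hxuv).2
  by_cases hx : x ∈ H
  · exact .inl ⟨hvertex hab hx hxab, hvertex hcd hx hxcd⟩
  · have hcone {u v : Pt} (huv : IsCcwSucc H p u v) (hxuv : x ∈ segment ℝ u v) :
        x ∈ openCone p u v := by
      rcases huv.eq_or_eq_or_mem_openCone hxuv with rfl | rfl | h
      exacts [absurd huv.left_mem hx, absurd huv.right_mem hx, h]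
    exact .inr (IsCcwSucc.eq_of_mem_openCone hH hab hcd (hcone hab hxab) (hcone hcd hxcd))

theorem validSegs_wheel (hH : IsHub H p) : ValidSegs (insert p H) (wheel H p) := by
  refine ⟨?_, fun a b c d hab hcd hne ↦ not_crosses_iff.2 fun x hxab hxcd ↦ ?_⟩
  · rintro e (⟨h, hh, rfl⟩ | ⟨a, b, hab, rfl⟩)
    · exact ⟨p, h, Finset.mem_insert_self p H, Finset.mem_insert_of_mem hh, (hH.ne hh).symm, rfl⟩
    · exact ⟨a, b, Finset.mem_insert_of_mem hab.left_mem, Finset.mem_insert_of_mem hab.right_mem,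
        ne_of_orient_pos hab.orient_pos, rfl⟩
  · rcases hab with ⟨h, hh, e₁⟩ | ⟨a', b', hab, e₁⟩ <;>
      rcases hcd with ⟨k, hk, e₂⟩ | ⟨c', d', hcd, e₂⟩ <;>
      rw [segment_congr e₁] at hxab <;> rw [segment_congr e₂] at hxcd <;>
      rw [e₁, e₂] at hne ⊢ <;> simp only [Sym2.mem_iff]
    · rcases hH.eq_of_mem_spokes hh hk hxab hxcd with rfl | rfl
      exacts [⟨.inl rfl, .inl rfl⟩, absurd rfl hne]
    · have ⟨hxh, hxcd⟩ := hH.eq_of_mem_spoke_of_mem_rim hh hcd hxab hxcd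
      exact ⟨.inr hxh, hxcd⟩
    · have ⟨hxk, hxab⟩ := hH.eq_of_mem_spoke_of_mem_rim hk hab hxcd hxab
      exact ⟨hxab, .inr hxk⟩
    · rcases hH.eq_of_mem_rims hab hcd hxab hxcd with hx | ⟨rfl, rfl⟩
      exacts [hx, absurd rfl hne]

theorem isCcwSucc_of_validSegs (hH : IsHub H p) {T : Set (Sym2 Pt)}
    (hT : ValidSegs (insert p H) T) (hsub : wheel H p ⊆ T) (ha : a ∈ H) (hb : b ∈ H)
    (hab : s(a, b) ∈ T) (hpos : 0 < orient p a b) : IsCcwSucc H p a b := by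
  refine ⟨ha, hb, hpos, fun c hc hcab ↦ ?_⟩
  obtain ⟨y, hyab, hypc⟩ := hH.exists_mem_openSegment_mem_segment ha hb hc hpos hcab
  have hne : s(a, b) ≠ s(p, c) := by
    intro he
    rcases Sym2.eq_iff.1 he with ⟨rfl, -⟩ | ⟨-, rfl⟩
    exacts [hH.notMem ha, hH.notMem hb]
  have hy := not_crosses_iff.1 (hT.2 a b p c hab (hsub (spoke_mem_wheel hc)) hne) y
    (openSegment_subset_segment ℝ a b hyab) hypc
  have hycone := openSegment_subset_openCone hpos hyab
  rcases Sym2.mem_iff.1 hy.1 with rfl | rfl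
  exacts [ne_of_orient_pos hycone.1 rfl, ne_of_orient_pos hycone.2 rfl]

theorem orient_ne_zero_of_validSegs (hH : IsHub H p) {T : Set (Sym2 Pt)}
    (hT : ValidSegs (insert p H) T) (hsub : wheel H p ⊆ T) (ha : a ∈ H) (hb : b ∈ H)
    (hne : a ≠ b) (hab : s(a, b) ∈ T) : orient p a b ≠ 0 := by
  intro hzero
  have hspoke : s(a, b) ≠ s(p, a) := by
    intro he
    rcases Sym2.eq_iff.1 he with ⟨rfl, -⟩ | ⟨-, rfl⟩
    exacts [hH.notMem ha, hH.notMem hb]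
  have hp := not_crosses_iff.1 (hT.2 a b p a hab (hsub (spoke_mem_wheel ha)) hspoke) p
    (hH.mem_segment_of_orient_eq_zero ha hb hne hzero) (left_mem_segment ℝ p a)
  rcases Sym2.mem_iff.1 hp.1 with rfl | rfl
  exacts [hH.notMem ha, hH.notMem hb]

theorem isTriangulation_wheel (hH : IsHub H p) : IsTriangulation (insert p H) (wheel H p) := by
  refine ⟨hH.validSegs_wheel, fun T hT hsub ↦ Subset.antisymm (fun e he ↦ ?_) hsub⟩
  obtain ⟨a, b, ha, hb, hne, rfl⟩ := hT.1 e he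
  rcases Finset.mem_insert.1 ha with rfl | haH
  · exact spoke_mem_wheel ((Finset.mem_insert.1 hb).resolve_left hne.symm)
  rcases Finset.mem_insert.1 hb with rfl | hbH
  · rw [Sym2.eq_swap]
    exact spoke_mem_wheel haH
  rcases (hH.orient_ne_zero_of_validSegs hT hsub haH hbH hne he).lt_or_gt with hneg | hpos
  · rw [Sym2.eq_swap] at he ⊢
    rw [orient_swap, neg_lt_zero] at hneg
    exact (hH.isCcwSucc_of_validSegs hT hsub hbH haH he hneg).mem_wheel
  · exact (hH.isCcwSucc_of_validSegs hT hsub haH hbH he hpos).mem_wheel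

end IsHub

end Wheel

/-! ### The triangles of the wheel -/

section Triangles

variable {H : Finset Pt} {p a b c u v x : Pt}

theorem IsTriangleOf.rotate {P : Finset Pt} {T : Set (Sym2 Pt)} (h : IsTriangleOf P T a b c) :
    IsTriangleOf P T b c a := by
  obtain ⟨ha, hb, hc, hab, hbc, hac, sab, sbc, sac, hpts, hsegs⟩ := h
  rw [Sym2.eq_swap] at sab sac
  rw [← openTriangle_rotate] at hpts hsegs
  exact ⟨hb, hc, ha, hbc, hac.symm, hab.symm, sbc, sac, sab, hpts, hsegs⟩

theorem Clockwise.rotate (h : Clockwise a b c) : Clockwise b c a :=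
  (orient_rotate a b c).trans_lt h

theorem IsCcwSucc.notMem_openTriangle_of_mem_wheel (hH : IsHub H p) (hab : IsCcwSucc H p a b)
    (huv : s(u, v) ∈ wheel H p) (hx : x ∈ segment ℝ u v) : x ∉ openTriangle p a b := by
  intro hxtri
  have hxcone := openTriangle_subset_openCone hab.orient_pos hxtri
  rcases huv with ⟨h, hh, he⟩ | ⟨c, d, hcd, he⟩ <;> rw [segment_congr he] at hx
  · exact hab.notMem_openCone_of_mem_segment hh hx hxcone
  · rcases hcd.eq_or_eq_or_mem_openCone hx with rfl | rfl | hxcone'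
    · exact hab.notMem_openCone x hcd.left_mem hxcone
    · exact hab.notMem_openCone x hcd.right_mem hxcone
    · obtain ⟨rfl, rfl⟩ := eq_of_mem_openCone hH hab hcd hxcone hxcone'
      exact notMem_openTriangle_of_mem_segment hab.orient_pos hx hxtri

theorem IsCcwSucc.isTriangleOf_wheel (hH : IsHub H p) (hab : IsCcwSucc H p a b) :
    IsTriangleOf (insert p H) (wheel H p) p b a := by
  refine ⟨Finset.mem_insert_self p H, Finset.mem_insert_of_mem hab.right_mem,
    Finset.mem_insert_of_mem hab.left_mem, (hH.ne hab.right_mem).symm,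
    (ne_of_orient_pos hab.orient_pos).symm, (hH.ne hab.left_mem).symm,
    spoke_mem_wheel hab.right_mem, ?_, spoke_mem_wheel hab.left_mem, ?_, ?_⟩
  · rw [Sym2.eq_swap]
    exact hab.mem_wheel
  · intro x hx
    rw [openTriangle_swap]
    rcases Finset.mem_insert.1 hx with rfl | hx
    · exact hab.notMem_openTriangle_of_mem_wheel hH (spoke_mem_wheel hab.left_mem)
        (left_mem_segment ℝ x a)
    · exact hab.notMem_openTriangle_of_mem_wheel hH (spoke_mem_wheel hx) (right_mem_segment ℝ p x)
  · intro u v huv x hx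
    rw [openTriangle_swap]
    exact hab.notMem_openTriangle_of_mem_wheel hH huv hx

theorem IsCcwSucc.clockwise (hab : IsCcwSucc H p a b) : Clockwise p b a := by
  rw [clockwise_iff_orient_neg, orient_swap]
  exact neg_lt_zero.2 hab.orient_pos

theorem isCcwSucc_of_isTriangleOf_wheel (h : IsTriangleOf (insert p H) (wheel H p) p b c)
    (hcw : Clockwise p b c) : IsCcwSucc H p c b := by
  obtain ⟨-, -, -, hpb, -, hpc, -, hbc, -⟩ := h
  refine (isCcwSucc_or_isCcwSucc_of_mem_wheel hpb.symm hpc.symm hbc).resolve_left fun hbc ↦ ?_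
  exact lt_asymm hbc.orient_pos hcw

theorem eq_hub_of_isTriangleOf_wheel (h : IsTriangleOf (insert p H) (wheel H p) a b c)
    (hcw : Clockwise a b c) : a = p ∨ b = p ∨ c = p := by
  by_contra! ⟨ha, hb, hc⟩
  obtain ⟨-, -, -, -, -, -, hab, hbc, hac, hpts, -⟩ := h
  rcases isCcwSucc_or_isCcwSucc_of_mem_wheel ha hb hab with hab | hba <;>
    rcases isCcwSucc_or_isCcwSucc_of_mem_wheel hb hc hbc with hbc | hcb <;>
    rcases isCcwSucc_or_isCcwSucc_of_mem_wheel ha hc hac with hac | hca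
  · exact hab.not_trans hbc hac
  · have hpos : 0 < orient a b c := by
      rw [orient_eq_add_add a b c p, orient_rotate p, orient_rotate p, orient_rotate p]
      exact add_pos (add_pos hbc.orient_pos hca.orient_pos) hab.orient_pos
    exact lt_asymm hpos hcw
  · exact hac.not_trans hcb hab
  · exact hca.not_trans hab hcb
  · exact hba.not_trans hac hbc
  · exact hbc.not_trans hca hba
  · refine hpts p (Finset.mem_insert_self p H) ?_
    rw [← openTriangle_swap]
    apply mem_openTriangle_of_orient_pos <;> rw [orient_rotate p]
    exacts [hac.orient_pos, hcb.orient_pos, hba.orient_pos]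
  · exact hcb.not_trans hba hca

theorem IsHub.isTriangleOf_wheel_and_clockwise_iff (hH : IsHub H p) :
    IsTriangleOf (insert p H) (wheel H p) a b c ∧ Clockwise a b c ↔
      (a = p ∧ IsCcwSucc H p c b) ∨ (b = p ∧ IsCcwSucc H p a c) ∨ (c = p ∧ IsCcwSucc H p b a) := by
  constructor
  · rintro ⟨h, hcw⟩
    rcases eq_hub_of_isTriangleOf_wheel h hcw with rfl | rfl | rfl
    · exact .inl ⟨rfl, isCcwSucc_of_isTriangleOf_wheel h hcw⟩
    · exact .inr (.inl ⟨rfl, isCcwSucc_of_isTriangleOf_wheel h.rotate hcw.rotate⟩)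
    · exact .inr (.inr ⟨rfl, isCcwSucc_of_isTriangleOf_wheel h.rotate.rotate hcw.rotate.rotate⟩)
  · rintro (⟨rfl, h⟩ | ⟨rfl, h⟩ | ⟨rfl, h⟩)
    · exact ⟨h.isTriangleOf_wheel hH, h.clockwise⟩
    · exact ⟨(h.isTriangleOf_wheel hH).rotate.rotate, h.clockwise.rotate.rotate⟩
    · exact ⟨(h.isTriangleOf_wheel hH).rotate, h.clockwise.rotate⟩

end Triangles

/-! ### Polar angles -/

theorem norm_mul_norm_mul_sin_arg_sub_arg (z w : ℂ) :
    ‖z‖ * ‖w‖ * Real.sin (w.arg - z.arg) = z.re * w.im - z.im * w.re := by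
  rw [Real.sin_sub, ← Complex.norm_mul_cos_arg z, ← Complex.norm_mul_sin_arg z,
    ← Complex.norm_mul_cos_arg w, ← Complex.norm_mul_sin_arg w]
  ring

theorem sin_pos_iff_of_abs_lt_two_pi {t : ℝ} (ht : |t| < 2 * Real.pi) :
    0 < Real.sin t ↔ (0 < t ∧ t < Real.pi) ∨ t < -Real.pi := by
  obtain ⟨hlo, hhi⟩ := abs_lt.1 ht
  constructor
  · intro hsin
    by_contra! hnot
    obtain ⟨hpi, hneg⟩ := hnot
    rcases le_or_gt t 0 with ht₀ | ht₀
    · exact hsin.not_ge (Real.sin_nonpos_of_nonpos_of_neg_pi_le ht₀ hneg)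
    · have := Real.sin_nonneg_of_nonneg_of_le_pi (x := t - Real.pi) (by linarith [hpi ht₀])
        (by linarith)
      rw [Real.sin_sub_pi] at this
      linarith
  · rintro (⟨h₀, hpi⟩ | hneg)
    · exact Real.sin_pos_of_pos_of_lt_pi h₀ hpi
    · rw [← Real.sin_add_two_pi]
      exact Real.sin_pos_of_pos_of_lt_pi (by linarith) (by linarith)

/-- The polar angle of `x` about `p`, in `(-π, π]`, with the plane identified with `ℂ`. It is `0`
for `x = p`. It turns the cyclic order of points around `p` into a linear order. -/
noncomputable def polarAngle (p x : Pt) : ℝ := (Complex.equivRealProdLm.symm (x - p)).arg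

section PolarAngle

variable {H : Finset Pt} {p a b : Pt}

theorem neg_pi_lt_polarAngle (p x : Pt) : -Real.pi < polarAngle p x := Complex.neg_pi_lt_arg _

theorem polarAngle_le_pi (p x : Pt) : polarAngle p x ≤ Real.pi := Complex.arg_le_pi _

theorem orient_pos_iff_polarAngle (ha : a ≠ p) (hb : b ≠ p) :
    0 < orient p a b ↔
      (polarAngle p a < polarAngle p b ∧ polarAngle p b < polarAngle p a + Real.pi) ∨
        polarAngle p b + Real.pi < polarAngle p a := by
  have hnorm {x : Pt} (hx : x ≠ p) : 0 < ‖Complex.equivRealProdLm.symm (x - p)‖ := by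
    simpa [sub_eq_zero] using hx
  have hsin : ‖Complex.equivRealProdLm.symm (a - p)‖ * ‖Complex.equivRealProdLm.symm (b - p)‖ *
      Real.sin (polarAngle p b - polarAngle p a) = orient p a b :=
    norm_mul_norm_mul_sin_arg_sub_arg _ _
  have hlt : |polarAngle p b - polarAngle p a| < 2 * Real.pi := by
    rw [abs_lt]
    constructor <;> linarith [neg_pi_lt_polarAngle p a, polarAngle_le_pi p a,
      neg_pi_lt_polarAngle p b, polarAngle_le_pi p b]
  rw [← hsin, mul_pos_iff_of_pos_left (mul_pos (hnorm ha) (hnorm hb)),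
    sin_pos_iff_of_abs_lt_two_pi hlt, sub_pos, sub_lt_iff_lt_add', sub_lt_iff_lt_add,
    neg_add_eq_sub, lt_sub_iff_add_lt]

namespace IsHub

theorem injOn_polarAngle (hH : IsHub H p) : InjOn (polarAngle p) H := fun _ ha _ hb hab ↦
  hH.eq_of_sameRay ha hb <| (SameRay.sameRay_map_iff Complex.equivRealProdLm.symm).1 <|
    Complex.sameRay_iff.2 (.inr (.inr hab))

theorem isCcwSucc_iff_of_polarAngle_lt (hH : IsHub H p) (ha : a ∈ H) (hb : b ∈ H)
    (hab : polarAngle p a < polarAngle p b) :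
    IsCcwSucc H p a b ↔
      ∀ c ∈ H, polarAngle p c ≤ polarAngle p a ∨ polarAngle p b ≤ polarAngle p c := by
  have hiff {x y : Pt} (hx : x ∈ H) (hy : y ∈ H) :=
    orient_pos_iff_polarAngle (hH.ne hx) (hH.ne hy)
  have hlo := neg_pi_lt_polarAngle p
  have hhi := polarAngle_le_pi p
  constructor
  · intro h c hc
    by_contra! ⟨hac, hcb⟩
    have hlt : polarAngle p b < polarAngle p a + Real.pi := by
      rcases (hiff ha hb).1 h.orient_pos with h | h <;> linarith [Real.pi_pos]
    exact h.notMem_openCone c hc ⟨(hiff ha hc).2 (.inl ⟨hac, by linarith⟩),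
      (hiff hc hb).2 (.inl ⟨hcb, by linarith⟩)⟩
  · intro h
    obtain ⟨d, hd, had⟩ := hH.exists_orient_pos ha
    have hlt : polarAngle p b < polarAngle p a + Real.pi := by
      rcases (hiff ha hd).1 had with had | had <;> rcases h d hd with h | h <;>
        linarith [hlo d, hhi b]
    refine ⟨ha, hb, (hiff ha hb).2 (.inl ⟨hab, hlt⟩), fun c hc hcab ↦ ?_⟩
    rcases (hiff ha hc).1 hcab.1 with hac | hac <;>
      rcases (hiff hc hb).1 hcab.2 with hcb | hcb <;> rcases h c hc with h | h <;>
      linarith [Real.pi_pos]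

theorem isCcwSucc_iff_of_polarAngle_gt (hH : IsHub H p) (ha : a ∈ H) (hb : b ∈ H)
    (hba : polarAngle p b < polarAngle p a) :
    IsCcwSucc H p a b ↔
      ∀ c ∈ H, polarAngle p b ≤ polarAngle p c ∧ polarAngle p c ≤ polarAngle p a := by
  have hiff {x y : Pt} (hx : x ∈ H) (hy : y ∈ H) :=
    orient_pos_iff_polarAngle (hH.ne hx) (hH.ne hy)
  have hlo := neg_pi_lt_polarAngle p
  have hhi := polarAngle_le_pi p
  constructor
  · intro h c hc
    have hlt : polarAngle p b + Real.pi < polarAngle p a :=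
      ((hiff ha hb).1 h.orient_pos).resolve_left fun h ↦ lt_asymm h.1 hba
    constructor <;> by_contra! hlt'
    · exact h.notMem_openCone c hc ⟨(hiff ha hc).2 (.inr (by linarith)),
        (hiff hc hb).2 (.inl ⟨hlt', by linarith [hlo c, hhi a]⟩)⟩
    · exact h.notMem_openCone c hc ⟨(hiff ha hc).2 (.inl ⟨hlt', by linarith [hlo b, hhi c]⟩),
        (hiff hc hb).2 (.inr (by linarith))⟩
  · intro h
    have hfar {c : Pt} (hc : c ∈ H) (hac : 0 < orient p a c) :
        polarAngle p c + Real.pi < polarAngle p a :=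
      ((hiff ha hc).1 hac).resolve_left fun hac ↦ hac.1.not_ge (h c hc).2
    obtain ⟨d, hd, had⟩ := hH.exists_orient_pos ha
    refine ⟨ha, hb, (hiff ha hb).2 (.inr (by linarith [hfar hd had, (h d hd).1])),
      fun c hc hcab ↦ ?_⟩
    rcases (hiff hc hb).1 hcab.2 with hcb | hcb <;>
      linarith [hfar hc hcab.1, (h c hc).1, hlo b, hhi a]

end IsHub

end PolarAngle

/-! ### Compatibility -/

theorem exists_bijOn_le_iff_le {α β γ δ : Type*} [Nonempty β] [LinearOrder γ] [LinearOrder δ]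
    {s : Finset α} {t : Finset β} {f : α → γ} {g : β → δ} (hf : InjOn f s) (hg : InjOn g t)
    (hcard : s.card = t.card) :
    ∃ φ : α → β, BijOn φ s t ∧ ∀ a ∈ s, ∀ b ∈ s, (g (φ a) ≤ g (φ b) ↔ f a ≤ f b) := by
  let : LinearOrder s := LinearOrder.lift' (fun a ↦ f a) hf.injective
  let : LinearOrder t := LinearOrder.lift' (fun b ↦ g b) hg.injective
  let e : s ≃o t := (monoEquivOfFin s (Fintype.card_coe s)).symm.trans
    (monoEquivOfFin t (by rw [Fintype.card_coe, hcard]))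
  let φ : α → β := Function.extend Subtype.val (fun a ↦ (e a : β)) fun _ ↦ Classical.arbitrary β
  have hφ (a : s) : φ a = e a := Subtype.val_injective.extend_apply _ _ a
  refine ⟨φ, ⟨fun a ha ↦ ?_, fun a ha b hb hab ↦ ?_, fun b hb ↦ ?_⟩, fun a ha b hb ↦ ?_⟩
  · exact hφ ⟨a, ha⟩ ▸ (e ⟨a, ha⟩).2
  · rw [hφ ⟨a, ha⟩, hφ ⟨b, hb⟩, Subtype.val_inj, e.injective.eq_iff] at hab
    exact congrArg Subtype.val hab
  · obtain ⟨a, ha⟩ := e.surjective ⟨b, hb⟩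
    exact ⟨a, a.2, by rw [hφ, ha]⟩
  · rw [hφ ⟨a, ha⟩, hφ ⟨b, hb⟩]
    exact e.le_iff_le (x := ⟨a, ha⟩) (y := ⟨b, hb⟩)

namespace IsHub

variable {H K : Finset Pt} {p q a b : Pt}

theorem isCcwSucc_iff_of_bijOn (hH : IsHub H p) (hK : IsHub K q) {f : Pt → Pt}
    (hf : BijOn f H K) (hle : ∀ a ∈ H, ∀ b ∈ H,
      (polarAngle q (f a) ≤ polarAngle q (f b) ↔ polarAngle p a ≤ polarAngle p b))
    (ha : a ∈ H) (hb : b ∈ H) : IsCcwSucc K q (f a) (f b) ↔ IsCcwSucc H p a b := by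
  have hforall {r : Pt → Prop} : (∀ c ∈ K, r c) ↔ ∀ c ∈ H, r (f c) := by
    simp only [← Finset.mem_coe, ← hf.image_eq, forall_mem_image]
  have hlt {x y : Pt} (hx : x ∈ H) (hy : y ∈ H) :
      polarAngle q (f x) < polarAngle q (f y) ↔ polarAngle p x < polarAngle p y :=
    lt_iff_lt_of_le_iff_le (hle y hy x hx)
  rcases lt_trichotomy (polarAngle p a) (polarAngle p b) with hab | hab | hab
  · rw [hH.isCcwSucc_iff_of_polarAngle_lt ha hb hab,
      hK.isCcwSucc_iff_of_polarAngle_lt (hf.mapsTo ha) (hf.mapsTo hb) ((hlt ha hb).2 hab), hforall]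
    exact forall₂_congr fun c hc ↦ or_congr (hle c hc a ha) (hle b hb c hc)
  · obtain rfl := hH.injOn_polarAngle ha hb hab
    exact iff_of_false (fun h ↦ ne_of_orient_pos h.orient_pos rfl)
      fun h ↦ ne_of_orient_pos h.orient_pos rfl
  · rw [hH.isCcwSucc_iff_of_polarAngle_gt ha hb hab,
      hK.isCcwSucc_iff_of_polarAngle_gt (hf.mapsTo ha) (hf.mapsTo hb) ((hlt hb ha).2 hab), hforall]
    exact forall₂_congr fun c hc ↦ and_congr (hle b hb c hc) (hle c hc a ha)

theorem compatibleVia_wheel (hH : IsHub H p) (hK : IsHub K q) {φ : Pt → Pt} (hp : φ p = q)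
    (hφ : BijOn φ H K)
    (hsucc : ∀ a ∈ H, ∀ b ∈ H, (IsCcwSucc K q (φ a) (φ b) ↔ IsCcwSucc H p a b)) :
    CompatibleVia (insert p H) (insert q K) (wheel H p) (wheel K q) φ := by
  have hhub {a : Pt} (ha : a ∈ insert p H) : φ a = q ↔ a = p := by
    refine ⟨fun h ↦ (Finset.mem_insert.1 ha).resolve_right fun haH ↦ ?_, fun h ↦ h ▸ hp⟩
    exact hK.notMem (h ▸ hφ.mapsTo haH)
  have hsucc' {a b : Pt} (ha : a ∈ insert p H) (hb : b ∈ insert p H) :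
      IsCcwSucc K q (φ a) (φ b) ↔ IsCcwSucc H p a b := by
    rcases Finset.mem_insert.1 ha with rfl | haH
    · exact iff_of_false (fun h ↦ hK.notMem (hp ▸ h.left_mem)) fun h ↦ hH.notMem h.left_mem
    rcases Finset.mem_insert.1 hb with rfl | hbH
    · exact iff_of_false (fun h ↦ hK.notMem (hp ▸ h.right_mem)) fun h ↦ hH.notMem h.right_mem
    exact hsucc a haH b hbH
  refine ⟨?_, fun a b c ha hb hc ↦ ?_⟩
  · rw [Finset.coe_insert, Finset.coe_insert, ← hp]
    exact hφ.insert (hp ▸ hK.notMem)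
  · rw [hH.isTriangleOf_wheel_and_clockwise_iff, hK.isTriangleOf_wheel_and_clockwise_iff,
      hhub ha, hhub hb, hhub hc, hsucc' hc hb, hsucc' ha hc, hsucc' hb ha]

theorem compatible_wheel (hH : IsHub H p) (hK : IsHub K q) (hcard : H.card = K.card) :
    Compatible (insert p H) (insert q K) (wheel H p) (wheel K q) := by
  obtain ⟨f, hf, hle⟩ := exists_bijOn_le_iff_le hH.injOn_polarAngle hK.injOn_polarAngle hcard
  have hfφ : EqOn f (Function.update f p q) H := fun a ha ↦
    (Function.update_of_ne (hH.ne ha) q f).symm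
  refine ⟨_, hH.compatibleVia_wheel hK (Function.update_self p q f) (hf.congr hfφ)
    fun a ha b hb ↦ ?_⟩
  rw [← hfφ ha, ← hfφ hb]
  exact hH.isCcwSucc_iff_of_bijOn hK hf hle ha hb

end IsHub

/-- Two point sets of the same size, each with exactly one internal point,
have compatible triangulations, obtained by joining the internal point of each set to all
convex hull points of that set. -/
theorem stmt5 (n : ℕ) (P Q : Finset Pt) (hPn : P.card = n) (hQn : Q.card = n)
    (hP : ¬ Collinear ℝ (P : Set Pt)) (hQ : ¬ Collinear ℝ (Q : Set Pt))
    (pP pQ : Pt)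
    (hPint : {x : Pt | InternalPoint P x} = {pP})
    (hQint : {x : Pt | InternalPoint Q x} = {pQ}) :
    ∃ TP TQ : Set (Sym2 Pt), IsTriangulation P TP ∧ IsTriangulation Q TQ ∧
      Compatible P Q TP TQ ∧
      (∀ h : Pt, HullPoint P h → s(pP, h) ∈ TP) ∧
      (∀ h : Pt, HullPoint Q h → s(pQ, h) ∈ TQ) := by
  obtain ⟨H, rfl, hH⟩ := exists_isHub_of_internalPoints_eq hPint
  obtain ⟨K, rfl, hK⟩ := exists_isHub_of_internalPoints_eq hQint
  have hcard : H.card = K.card := by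
    rw [Finset.card_insert_of_notMem hH.notMem] at hPn
    rw [Finset.card_insert_of_notMem hK.notMem] at hQn
    omega
  exact ⟨wheel H pP, wheel K pQ, hH.isTriangulation_wheel, hK.isTriangulation_wheel,
    hH.compatible_wheel hK hcard, fun _ ↦ hH.spoke_mem_wheel_of_hullPoint,
    fun _ ↦ hK.spoke_mem_wheel_of_hullPoint⟩
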